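/- Set m = k_i − k_{i−1} and let c := Σ_{f=0}^{m} (−1)^{m−f} ξ^f ⊗ φ(x(k)_{i,m−f}) ∈ H_{k⁺ⁱ} ⊗_{H_{₊ᵢk}} H_{k⁺ⁱ}. Then for every z ∈ H_k one has (φ(z) ⊗ 1)·c = (1 ⊗ φ(z))·c; consequently the 𝕜-linear map H_k → H_{k⁺ⁱ} ⊗_{H_{₊ᵢk}} H_{k⁺ⁱ} sending z to (φ(z) ⊗ 1)·c is a homomorphism of (H_k, H_k)-bimodules (where H_k acts on the left through φ on the left tensor factor and on the right through φ on the right tensor factor). -/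

import Mathlib

/-!
Cohomology rings of `n`-step partial flag varieties, following
Khovanov–Lauda, "A diagrammatic approach to categorification of quantum groups III",
Section 5 (Iterated flag varieties).
-/

open MvPolynomial Finset TensorProduct

noncomputable section

variable (𝕜 : Type) [Field 𝕜]

/-- The generator `x(k)_{j,α}` of `H_k` (with the conventions `x(k)_{j,0} = 1` and
`x(k)_{j,α} = 0` for `j` or `α` out of range), at the level of the ambient polynomial ring. -/
def xp (n : ℕ) (k : ℕ → ℕ) (j α : ℕ) : MvPolynomial (ℕ × ℕ) 𝕜 :=
  if α = 0 then 1 else if 1 ≤ j ∧ j ≤ n ∧ α ≤ k j - k (j - 1) then X (j, α) else 0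

/-- The degree `2d` part of the defining relation of `H_k`: the sum over all tuples
`(α_1, …, α_n)` with `α_1 + ⋯ + α_n = d` of the products `x(k)_{1,α_1} ⋯ x(k)_{n,α_n}`
(out-of-range tuples contribute `0`). -/
def relPoly (n : ℕ) (k : ℕ → ℕ) (d : ℕ) : MvPolynomial (ℕ × ℕ) 𝕜 :=
  ∑ t ∈ Finset.Nat.antidiagonalTuple n d, ∏ j : Fin n, xp 𝕜 n k ((j : ℕ) + 1) (t j)

/-- The pairs `(j, α)` indexing the actual generators of `H_k`. -/
def InRangeK (n : ℕ) (k : ℕ → ℕ) (j α : ℕ) : Prop :=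
  1 ≤ j ∧ j ≤ n ∧ 1 ≤ α ∧ α ≤ k j - k (j - 1)

/-- The defining ideal of `H_k`: the relations `relPoly` for every `d ≥ 1`, together with
all the irrelevant variables of the ambient polynomial ring. -/
def relIdealK (n : ℕ) (k : ℕ → ℕ) : Ideal (MvPolynomial (ℕ × ℕ) 𝕜) :=
  Ideal.span ({p | ∃ d, 1 ≤ d ∧ p = relPoly 𝕜 n k d} ∪
    {p | ∃ j α : ℕ, ¬ InRangeK n k j α ∧ p = X (j, α)})

/-- The cohomology ring `H_k` of the `n`-step flag variety `Fl(k)`. -/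
abbrev HK (n : ℕ) (k : ℕ → ℕ) : Type := MvPolynomial (ℕ × ℕ) 𝕜 ⧸ relIdealK 𝕜 n k

/-- The generator `x(k)_{j,α} ∈ H_k` (with conventions). -/
def xK (n : ℕ) (k : ℕ → ℕ) (j α : ℕ) : HK 𝕜 n k :=
  Ideal.Quotient.mk (relIdealK 𝕜 n k) (xp 𝕜 n k j α)

open Classical in
/-- The dual generator `x̄(k)_{j,α}`: the sum over all tuples `(α_ℓ)_{ℓ ≠ j}` with
`∑_{ℓ ≠ j} α_ℓ = α` of the products `∏_{ℓ ≠ j} x(k)_{ℓ,α_ℓ}`, at the polynomial level. -/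
def xbarp (n : ℕ) (k : ℕ → ℕ) (j α : ℕ) : MvPolynomial (ℕ × ℕ) 𝕜 :=
  ∑ t ∈ Finset.Nat.antidiagonalTuple n α,
    if ∀ ℓ : Fin n, (ℓ : ℕ) + 1 = j → t ℓ = 0 then
      ∏ ℓ : Fin n, xp 𝕜 n k ((ℓ : ℕ) + 1) (t ℓ)
    else 0

/-- The dual generator `x̄(k)_{j,α} ∈ H_k`. -/
def xbarK (n : ℕ) (k : ℕ → ℕ) (j α : ℕ) : HK 𝕜 n k :=
  Ideal.Quotient.mk (relIdealK 𝕜 n k) (xbarp 𝕜 n k j α)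

/-- The dual generator with an integer index, with `x̄(k)_{j,α} = 0` for `α < 0`. -/
def xbarKZ (n : ℕ) (k : ℕ → ℕ) (j : ℕ) (α : ℤ) : HK 𝕜 n k :=
  if 0 ≤ α then xbarK 𝕜 n k j α.toNat else 0

/-- The sequence `₊ᵢk`, obtained from `k` by replacing `k i` with `k i + 1`. -/
def kup (k : ℕ → ℕ) (i : ℕ) : ℕ → ℕ := fun j => if j = i then k i + 1 else k j

/-- The pairs `(j, α)` indexing the actual generators of `H_{k⁺ⁱ}`:
`ξ` is the variable `(0, 1)`, the `x_{j,α}` (`j ≠ i+1`) are the variables `(j, α)`, and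
the `x'_{i+1,α}` are the variables `(i+1, α)`. -/
def InRangeKi (n : ℕ) (k : ℕ → ℕ) (i j α : ℕ) : Prop :=
  (j = 0 ∧ α = 1) ∨
  (1 ≤ j ∧ j ≤ n ∧ j ≠ i + 1 ∧ 1 ≤ α ∧ α ≤ k j - k (j - 1)) ∨
  (j = i + 1 ∧ 1 ≤ α ∧ α ≤ k (i + 1) - k i - 1)

/-- The generator `x_{j,α}` (for `j ≠ i + 1`) of `H_{k⁺ⁱ}`, with conventions,
at the polynomial level. -/
def yp (n : ℕ) (k : ℕ → ℕ) (i j α : ℕ) : MvPolynomial (ℕ × ℕ) 𝕜 :=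
  if α = 0 then 1
  else if 1 ≤ j ∧ j ≤ n ∧ j ≠ i + 1 ∧ α ≤ k j - k (j - 1) then X (j, α) else 0

/-- The generator `x'_{i+1,α}` of `H_{k⁺ⁱ}`, with conventions, at the polynomial level. -/
def y'p (n : ℕ) (k : ℕ → ℕ) (i α : ℕ) : MvPolynomial (ℕ × ℕ) 𝕜 :=
  if α = 0 then 1 else if α ≤ k (i + 1) - k i - 1 then X (i + 1, α) else 0

/-- The coefficient of `t^α` in the `j`-th factor of the generating series
`(1 + ξt) ⬝ (∑_α x'_{i+1,α} t^α) ⬝ ∏_{j ≠ i+1} (∑_α x_{j,α} t^α)` defining `H_{k⁺ⁱ}`;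
the factor `j = 0` is `1 + ξ t`. -/
def fp (n : ℕ) (k : ℕ → ℕ) (i j α : ℕ) : MvPolynomial (ℕ × ℕ) 𝕜 :=
  if j = 0 then (if α = 0 then 1 else if α = 1 then X (0, 1) else 0)
  else if j = i + 1 then y'p 𝕜 n k i α
  else yp 𝕜 n k i j α

/-- The coefficient of `t^d` in
`(1 + ξt) ⬝ (∑_α x'_{i+1,α} t^α) ⬝ ∏_{j ≠ i+1} (∑_α x_{j,α} t^α)`. -/
def relPolyKi (n : ℕ) (k : ℕ → ℕ) (i d : ℕ) : MvPolynomial (ℕ × ℕ) 𝕜 :=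
  ∑ t ∈ Finset.Nat.antidiagonalTuple (n + 1) d, ∏ j : Fin (n + 1), fp 𝕜 n k i (j : ℕ) (t j)

/-- The defining ideal of `H_{k⁺ⁱ}`. -/
def relIdealKi (n : ℕ) (k : ℕ → ℕ) (i : ℕ) : Ideal (MvPolynomial (ℕ × ℕ) 𝕜) :=
  Ideal.span ({p | ∃ d, 1 ≤ d ∧ p = relPolyKi 𝕜 n k i d} ∪
    {p | ∃ j α : ℕ, ¬ InRangeKi n k i j α ∧ p = X (j, α)})

/-- The cohomology ring `H_{k⁺ⁱ}` of the `(n+1)`-step flag variety `Fl(k⁺ⁱ)`. -/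
abbrev HKi (n : ℕ) (k : ℕ → ℕ) (i : ℕ) : Type := MvPolynomial (ℕ × ℕ) 𝕜 ⧸ relIdealKi 𝕜 n k i

/-- The degree `2` generator `ξ ∈ H_{k⁺ⁱ}`. -/
def xiK (n : ℕ) (k : ℕ → ℕ) (i : ℕ) : HKi 𝕜 n k i :=
  Ideal.Quotient.mk (relIdealKi 𝕜 n k i) (X (0, 1))

/-- The generator `x_{j,α} ∈ H_{k⁺ⁱ}` (for `j ≠ i + 1`), with conventions. -/
def yK (n : ℕ) (k : ℕ → ℕ) (i j α : ℕ) : HKi 𝕜 n k i :=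
  Ideal.Quotient.mk (relIdealKi 𝕜 n k i) (yp 𝕜 n k i j α)

/-- The generator `x'_{i+1,α} ∈ H_{k⁺ⁱ}`, with conventions. -/
def y'K (n : ℕ) (k : ℕ → ℕ) (i α : ℕ) : HKi 𝕜 n k i :=
  Ideal.Quotient.mk (relIdealKi 𝕜 n k i) (y'p 𝕜 n k i α)

/-- `φ : H_k → H_{k⁺ⁱ}` is the algebra homomorphism determined by
`φ(x(k)_{j,α}) = x_{j,α}` for `j ≠ i+1` and
`φ(x(k)_{i+1,α}) = ξ·x'_{i+1,α-1} + x'_{i+1,α}`. -/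
def IsPhi (n : ℕ) (k : ℕ → ℕ) (i : ℕ) (φ : HK 𝕜 n k →ₐ[𝕜] HKi 𝕜 n k i) : Prop :=
  (∀ j α : ℕ, j ≠ i + 1 → φ (xK 𝕜 n k j α) = yK 𝕜 n k i j α) ∧
  (∀ α : ℕ, 1 ≤ α → φ (xK 𝕜 n k (i + 1) α) =
    xiK 𝕜 n k i * y'K 𝕜 n k i (α - 1) + y'K 𝕜 n k i α)

/-- `ψ : H_{₊ᵢk} → H_{k⁺ⁱ}` is the algebra homomorphism determined by
`ψ(x(₊ᵢk)_{j,α}) = x_{j,α}` for `j ≠ i, i+1`, `ψ(x(₊ᵢk)_{i+1,α}) = x'_{i+1,α}`, and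
`ψ(x(₊ᵢk)_{i,α}) = ξ·x_{i,α-1} + x_{i,α}`. -/
def IsPsi (n : ℕ) (k : ℕ → ℕ) (i : ℕ) (ψ : HK 𝕜 n (kup k i) →ₐ[𝕜] HKi 𝕜 n k i) : Prop :=
  (∀ j α : ℕ, j ≠ i → j ≠ i + 1 → ψ (xK 𝕜 n (kup k i) j α) = yK 𝕜 n k i j α) ∧
  (∀ α : ℕ, ψ (xK 𝕜 n (kup k i) (i + 1) α) = y'K 𝕜 n k i α) ∧
  (∀ α : ℕ, 1 ≤ α → ψ (xK 𝕜 n (kup k i) i α) =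
    xiK 𝕜 n k i * yK 𝕜 n k i i (α - 1) + yK 𝕜 n k i i α)

/-- The degree `2d` homogeneous component of a quotient of the polynomial ring, where the
variable `(j, α)` has degree `2α`. -/
def qgrade (I : Ideal (MvPolynomial (ℕ × ℕ) 𝕜)) (d : ℕ) :
    Submodule 𝕜 (MvPolynomial (ℕ × ℕ) 𝕜 ⧸ I) :=
  Submodule.map (Ideal.Quotient.mkₐ 𝕜 I).toLinearMap
    (weightedHomogeneousSubmodule 𝕜 (fun v : ℕ × ℕ => 2 * v.2) d)

end

section Statements2

variable (𝕜 : Type) [Field 𝕜]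

/-!
An element `a` of a commutative `S`-algebra `A` is balanced for `c ∈ A ⊗[S] A` if
`(a ⊗ 1) c = (1 ⊗ a) c`; such elements form an `S`-subalgebra. Since `ψ(x(₊ᵢk)_i)` has generating
series `(1 + ξt) x_i(t)`, the series of `x_i ⊗ 1` and `1 ⊗ x_i` satisfy
`(1 + (ξ ⊗ 1)t) (x_i ⊗ 1)(t) = (1 + (1 ⊗ ξ)t) (1 ⊗ x_i)(t)`. Up to sign, `c` is the coefficient of
`t^m` in `(1 ⊗ x_i)(t) / (1 + (ξ ⊗ 1)t)`, so `(ξ ⊗ 1 - 1 ⊗ ξ) c` is, up to sign, the coefficient of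
`t^(m+1)` in `(1 ⊗ x_i)(t) - (x_i ⊗ 1)(t)`, which vanishes because `x_{i,m+1} = 0`. Hence `ξ` is
balanced for `c`, and `φ(H_k)` is contained in the algebra generated by `ξ` and the image of `ψ`.
-/

theorem sub_mul_alternating_sum {T : Type*} [CommRing T] {a b : T} {y w : ℕ → T}
    (hzero : y 0 = w 0) (hsucc : ∀ α, a * y α + y (α + 1) = b * w α + w (α + 1)) (m : ℕ) :
    (a - b) * ∑ f ∈ range (m + 1), (-1) ^ (m - f) * (a ^ f * w (m - f)) =
      (-1) ^ m * (w (m + 1) - y (m + 1)) := by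
  induction m with
  | zero =>
    simp only [zero_add, sum_range_one, pow_zero, Nat.sub_zero, one_mul]
    linear_combination hsucc 0 - a * hzero
  | succ m ih =>
    have hshift : ∑ f ∈ range (m + 1), (-1) ^ (m + 1 - (f + 1)) *
          (a ^ (f + 1) * w (m + 1 - (f + 1))) =
        a * ∑ f ∈ range (m + 1), (-1) ^ (m - f) * (a ^ f * w (m - f)) := by
      rw [mul_sum]
      refine sum_congr rfl fun f _ => ?_
      rw [Nat.add_sub_add_right]
      ring
    rw [sum_range_succ', hshift, Nat.sub_zero, pow_zero, one_mul]
    linear_combination a * ih + (-1) ^ (m + 1) * hsucc (m + 1)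

section Balanced

variable {S A : Type*} [CommRing S] [CommRing A] [Algebra S A]

/-- The subalgebra of those `a` whose left and right actions on `c ∈ A ⊗[S] A` coincide. -/
def balancedSubalgebra (c : A ⊗[S] A) : Subalgebra S A where
  carrier := {a | (a ⊗ₜ[S] (1 : A)) * c = ((1 : A) ⊗ₜ[S] a) * c}
  mul_mem' {a b} ha hb := by
    have hleft : (a * b) ⊗ₜ[S] (1 : A) = (a ⊗ₜ 1) * (b ⊗ₜ 1) := by simp
    have hright : (1 : A) ⊗ₜ[S] (a * b) = (1 ⊗ₜ a) * (1 ⊗ₜ b) := by simp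
    rw [Set.mem_ofPred_eq] at ha hb ⊢
    rw [hleft, hright, mul_assoc, hb, mul_left_comm, ha, mul_left_comm, mul_assoc]
  add_mem' {a b} ha hb := by
    rw [Set.mem_ofPred_eq] at ha hb ⊢
    rw [add_tmul, tmul_add, add_mul, add_mul, ha, hb]
  algebraMap_mem' s := by
    rw [Set.mem_ofPred_eq, Algebra.TensorProduct.tmul_one_eq_one_tmul]

theorem mem_balancedSubalgebra {c : A ⊗[S] A} {a : A} :
    a ∈ balancedSubalgebra c ↔ (a ⊗ₜ[S] (1 : A)) * c = ((1 : A) ⊗ₜ[S] a) * c :=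
  Iff.rfl

variable (S) in
/-- The element `∑ f ≤ m, (-1)^(m - f) ξ^f ⊗ x_(m - f)` of `A ⊗[S] A`, which is a Casimir element
when `x` has length `m` and the coefficients of `(1 + ξt) ∑ x_α t^α` lie in `S`. -/
noncomputable def casimirElement (ξ : A) (x : ℕ → A) (m : ℕ) : A ⊗[S] A :=
  ∑ f ∈ range (m + 1), (-1 : A ⊗[S] A) ^ (m - f) * ((ξ ^ f) ⊗ₜ[S] x (m - f))

theorem mem_balancedSubalgebra_casimirElement {ξ : A} {x : ℕ → A} {m : ℕ}
    (hzero : x 0 ∈ (⊥ : Subalgebra S A))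
    (hsucc : ∀ α, ξ * x α + x (α + 1) ∈ (⊥ : Subalgebra S A)) (hlast : x (m + 1) = 0) :
    ξ ∈ balancedSubalgebra (casimirElement S ξ x m) := by
  have tmul_one_eq {a : A} (ha : a ∈ (⊥ : Subalgebra S A)) : a ⊗ₜ[S] (1 : A) = 1 ⊗ₜ a := by
    obtain ⟨s, rfl⟩ := Algebra.mem_bot.1 ha
    exact Algebra.TensorProduct.tmul_one_eq_one_tmul s
  have hseries (α : ℕ) : (ξ ⊗ₜ[S] (1 : A)) * (x α ⊗ₜ 1) + x (α + 1) ⊗ₜ 1 =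
      (1 ⊗ₜ ξ) * (1 ⊗ₜ x α) + 1 ⊗ₜ x (α + 1) := by
    simpa only [add_tmul, tmul_add, Algebra.TensorProduct.tmul_mul_tmul, mul_one] using
      tmul_one_eq (hsucc α)
  have htele := sub_mul_alternating_sum (tmul_one_eq hzero) hseries m
  simp only [hlast, zero_tmul, tmul_zero, sub_zero, mul_zero, Algebra.TensorProduct.tmul_pow,
    one_pow, Algebra.TensorProduct.tmul_mul_tmul, mul_one, one_mul, sub_mul] at htele
  exact mem_balancedSubalgebra.2 (sub_eq_zero.1 htele)

end Balanced

theorem mem_of_mul_add_succ_mem {A σ : Type*} [Ring A] [SetLike σ A] [SubringClass σ A] {B : σ}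
    {ξ : A} {x : ℕ → A} (hξ : ξ ∈ B) (hzero : x 0 ∈ B)
    (hsucc : ∀ α, ξ * x α + x (α + 1) ∈ B) (α : ℕ) : x α ∈ B := by
  induction α with
  | zero => exact hzero
  | succ α ih => simpa only [add_sub_cancel_left] using sub_mem (hsucc α) (mul_mem hξ ih)

section FlagRings

variable {𝕜} {n i : ℕ} {k : ℕ → ℕ}

theorem xK_zero (j : ℕ) : xK 𝕜 n k j 0 = 1 := by
  rw [xK, xp, if_pos rfl, map_one]

theorem xK_eq_zero_of_lt {j α : ℕ} (h : k j - k (j - 1) < α) : xK 𝕜 n k j α = 0 := by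
  rw [xK, xp, if_neg (by lia), if_neg (by lia), map_zero]

theorem mk_X_eq_xK {j α : ℕ} (h : InRangeK n k j α) :
    Ideal.Quotient.mk (relIdealK 𝕜 n k) (X (j, α)) = xK 𝕜 n k j α := by
  obtain ⟨hj, hjn, hα, hαk⟩ := h
  rw [xK, xp, if_neg (by lia), if_pos ⟨hj, hjn, hαk⟩]

theorem mk_X_eq_zero {j α : ℕ} (h : ¬ InRangeK n k j α) :
    Ideal.Quotient.mk (relIdealK 𝕜 n k) (X (j, α)) = 0 :=
  Ideal.Quotient.eq_zero_iff_mem.2 (Ideal.subset_span (Or.inr ⟨j, α, h, rfl⟩))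

variable (𝕜 n k) in
theorem adjoin_range_xK :
    Algebra.adjoin 𝕜 (Set.range fun p : ℕ × ℕ => xK 𝕜 n k p.1 p.2) = ⊤ := by
  rw [eq_top_iff, ← (AlgHom.range_eq_top _).2 (Ideal.Quotient.mkₐ_surjective 𝕜 (relIdealK 𝕜 n k)),
    ← Algebra.map_top, ← adjoin_range_X, AlgHom.map_adjoin, Algebra.adjoin_le_iff]
  rintro _ ⟨_, ⟨⟨j, α⟩, rfl⟩, rfl⟩
  rw [Ideal.Quotient.mkₐ_eq_mk, SetLike.mem_coe]
  by_cases h : InRangeK n k j α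
  · exact mk_X_eq_xK (𝕜 := 𝕜) h ▸ Algebra.subset_adjoin ⟨(j, α), rfl⟩
  · exact mk_X_eq_zero (𝕜 := 𝕜) h ▸ zero_mem _

variable {φ : HK 𝕜 n k →ₐ[𝕜] HKi 𝕜 n k i} {ψ : HK 𝕜 n (kup k i) →ₐ[𝕜] HKi 𝕜 n k i}

theorem IsPhi.xi_mul_add_eq_psi (hφ : IsPhi 𝕜 n k i φ) (hψ : IsPsi 𝕜 n k i ψ) (α : ℕ) :
    xiK 𝕜 n k i * φ (xK 𝕜 n k i α) + φ (xK 𝕜 n k i (α + 1)) =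
      ψ (xK 𝕜 n (kup k i) i (α + 1)) := by
  rw [hφ.1 i α i.succ_ne_self.symm, hφ.1 i (α + 1) i.succ_ne_self.symm,
    hψ.2.2 (α + 1) α.succ_pos, Nat.add_sub_cancel]

theorem IsPhi.range_le (hφ : IsPhi 𝕜 n k i φ) (hψ : IsPsi 𝕜 n k i ψ)
    {B : Subalgebra 𝕜 (HKi 𝕜 n k i)} (hB : ψ.range ≤ B) (hξ : xiK 𝕜 n k i ∈ B) :
    φ.range ≤ B := by
  have hψB (w) : ψ w ∈ B := hB ⟨w, rfl⟩
  rw [← Algebra.map_top, ← adjoin_range_xK, AlgHom.map_adjoin, Algebra.adjoin_le_iff]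
  rintro _ ⟨_, ⟨⟨j, α⟩, rfl⟩, rfl⟩
  rw [SetLike.mem_coe]
  rcases eq_or_ne j i with rfl | hji
  · refine mem_of_mul_add_succ_mem (x := fun α => φ (xK 𝕜 n k j α)) hξ ?_ (fun β => ?_) α
    · simp only [xK_zero, map_one, one_mem]
    · exact hφ.xi_mul_add_eq_psi hψ β ▸ hψB _
  rcases eq_or_ne j (i + 1) with rfl | hji'
  · rcases α with _ | α
    · simp only [xK_zero, map_one, one_mem]
    · rw [hφ.2 (α + 1) α.succ_pos, ← hψ.2.1, ← hψ.2.1]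
      exact add_mem (mul_mem hξ (hψB _)) (hψB _)
  · rw [hφ.1 j α hji', ← hψ.1 j α hji hji']
    exact hψB _

end FlagRings

set_option synthInstance.maxHeartbeats 1000000 in
set_option maxHeartbeats 1000000 in
theorem stmt11 (n N i : ℕ) (k : ℕ → ℕ)
    (hn : 1 ≤ n) (hk0 : k 0 = 0) (hkN : k n = N) (hmono : ∀ j, j < n → k j ≤ k (j + 1))
    (hi1 : 1 ≤ i) (hin : i + 1 ≤ n) (hik : k i < k (i + 1))
    (φ : HK 𝕜 n k →ₐ[𝕜] HKi 𝕜 n k i) (hφ : IsPhi 𝕜 n k i φ)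
    (ψ : HK 𝕜 n (kup k i) →ₐ[𝕜] HKi 𝕜 n k i) (hψ : IsPsi 𝕜 n k i ψ) :
    letI : Algebra (HK 𝕜 n (kup k i)) (HKi 𝕜 n k i) := ψ.toRingHom.toAlgebra
    ∀ z : HK 𝕜 n k,
      (φ z ⊗ₜ[HK 𝕜 n (kup k i)] (1 : HKi 𝕜 n k i)) *
        (∑ f ∈ Finset.range (k i - k (i - 1) + 1),
          (-1 : TensorProduct (HK 𝕜 n (kup k i)) (HKi 𝕜 n k i) (HKi 𝕜 n k i)) ^
              (k i - k (i - 1) - f) *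
            ((xiK 𝕜 n k i ^ f) ⊗ₜ[HK 𝕜 n (kup k i)] φ (xK 𝕜 n k i (k i - k (i - 1) - f)))) =
      ((1 : HKi 𝕜 n k i) ⊗ₜ[HK 𝕜 n (kup k i)] φ z) *
        (∑ f ∈ Finset.range (k i - k (i - 1) + 1),
          (-1 : TensorProduct (HK 𝕜 n (kup k i)) (HKi 𝕜 n k i) (HKi 𝕜 n k i)) ^
              (k i - k (i - 1) - f) *
            ((xiK 𝕜 n k i ^ f) ⊗ₜ[HK 𝕜 n (kup k i)] φ (xK 𝕜 n k i (k i - k (i - 1) - f)))) := by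
  let : Algebra (HK 𝕜 n (kup k i)) (HKi 𝕜 n k i) := ψ.toRingHom.toAlgebra
  have : IsScalarTower 𝕜 (HK 𝕜 n (kup k i)) (HKi 𝕜 n k i) :=
    .of_algebraMap_eq' ψ.comp_algebraMap.symm
  intro z
  let x (α : ℕ) : HKi 𝕜 n k i := φ (xK 𝕜 n k i α)
  let c := casimirElement (HK 𝕜 n (kup k i)) (xiK 𝕜 n k i) x (k i - k (i - 1))
  have hzero : x 0 = 1 := by simp only [x, xK_zero, map_one]
  have hlast : x (k i - k (i - 1) + 1) = 0 := by
    simp only [x, xK_eq_zero_of_lt (Nat.lt_succ_self _), map_zero]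
  have hξ : xiK 𝕜 n k i ∈ balancedSubalgebra c :=
    mem_balancedSubalgebra_casimirElement (hzero ▸ one_mem _)
      (fun α => Algebra.mem_bot.2 ⟨_, (hφ.xi_mul_add_eq_psi hψ α).symm⟩) hlast
  have hψc : ψ.range ≤ (balancedSubalgebra c).restrictScalars 𝕜 := by
    rintro _ ⟨s, rfl⟩
    exact algebraMap_mem (balancedSubalgebra c) s
  have hz : φ z ∈ balancedSubalgebra c := hφ.range_le hψ hψc hξ ⟨z, rfl⟩
  exact mem_balancedSubalgebra.1 hz

end Statements2
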